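/- Let μ, ν be Borel probability measures on ℝ, neither of which is a point mass, let a ∈ ℝ, and define u_μ(z) = F_μ(z) − z + a and u_ν(z) = F_ν(z) − z + a, which are analytic self-maps of ℂ⁺. Then u_μ ∘ u_ν is a conformal automorphism of ℂ⁺ if and only if both μ and ν are convex combinations of two point masses, i.e. μ = s·δ_α + (1−s)·δ_u and ν = t·δ_β + (1−t)·δ_v for some s, t ∈ (0,1) and real numbers α ≠ u, β ≠ v. -/

import Mathlib

open Complex Filter Set Topology MeasureTheory

/-- The open upper half-plane `ℂ⁺ = {z : ℂ | Im z > 0}`. -/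
def UHP : Set ℂ := {z : ℂ | 0 < z.im}

/-- The Cauchy transform `G_μ(z) = ∫ dμ(t)/(z − t)` of a measure `μ` on `ℝ`. -/
noncomputable def cauchyT (μ : Measure ℝ) (z : ℂ) : ℂ :=
  ∫ t, (z - (t : ℂ))⁻¹ ∂μ

/-- The reciprocal Cauchy transform `F_μ = 1/G_μ`. -/
noncomputable def Fmeas (μ : Measure ℝ) (z : ℂ) : ℂ := (cauchyT μ z)⁻¹

/-!
For `μ` not a point mass, `u_μ` maps `ℂ⁺` into itself, hence contracts the hyperbolic metric by
Schwarz–Pick. If `u_μ ∘ u_ν` is an automorphism, it is an isometry, so each of the two contractions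
preserves the distance of some pair of distinct points. The Pick kernel
`(u_μ(z) - conj u_μ(w)) / (z - conj w)` of `u_μ` is the Gram matrix of the functions
`t ↦ F_μ(z) / (z - t) - 1` in `L²(μ)`, and preserving the distance of `z ≠ w` is equality in the
Cauchy–Schwarz inequality for the functions at `z` and `w`. These are then proportional, so
`μ`-almost every `t` is a root of a fixed nonzero quadratic polynomial. Conversely, for a two-atomic
`μ` the map `u_μ` is a Möbius automorphism `z ↦ c - k / (z - m)` of `ℂ⁺` with `k > 0`.
-/

open scoped ComplexConjugate UpperHalfPlane Polynomial InnerProductSpace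

section InjectiveHolomorphic

lemma not_eventually_eq_const_of_injOn {X Y : Type*} [TopologicalSpace X] {f : X → Y} {U : Set X}
    {x : X} [(𝓝[≠] x).NeBot] (hU : U ∈ 𝓝 x) (hinj : InjOn f U) :
    ¬ ∀ᶠ y in 𝓝 x, f y = f x := by
  intro hconst
  have hself : ∀ᶠ y in 𝓝 x, y = x := by
    filter_upwards [hconst, hU] with y hy hyU using hinj hyU (mem_of_mem_nhds hU) hy
  obtain ⟨y, heq, hne⟩ :=
    ((hself.filter_mono nhdsWithin_le_nhds).and (eventually_mem_nhdsWithin (s := {x}ᶜ))).exists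
  exact hne heq

variable {f : ℂ → ℂ} {U : Set ℂ} {z : ℂ}

lemma eventually_deriv_ne_zero_of_injOn (hU : IsOpen U) (hf : DifferentiableOn ℂ f U)
    (hinj : InjOn f U) (hz : z ∈ U) : ∀ᶠ w in 𝓝[≠] z, deriv f w ≠ 0 := by
  have hderiv := (hf.analyticAt (hU.mem_nhds hz)).deriv
  refine hderiv.eventually_eq_zero_or_eventually_ne_zero.resolve_left fun hzero => ?_
  obtain ⟨r, hr, hball⟩ := Metric.mem_nhds_iff.1 (hzero.and (hU.mem_nhds hz))
  refine not_eventually_eq_const_of_injOn (hU.mem_nhds hz) hinj ?_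
  filter_upwards [Metric.ball_mem_nhds z hr] with w hw
  exact Metric.isOpen_ball.is_const_of_deriv_eq_zero (convex_ball z r).isPreconnected
    (hf.mono fun x hx => (hball hx).2) (fun x hx => (hball hx).1) hw (Metric.mem_ball_self hr)

lemma nhds_le_map_nhds_of_injOn (hU : IsOpen U) (hf : DifferentiableOn ℂ f U)
    (hinj : InjOn f U) (hz : z ∈ U) : 𝓝 (f z) ≤ map f (𝓝 z) :=
  (hf.analyticAt (hU.mem_nhds hz)).eventually_constant_or_nhds_le_map_nhds.resolve_left
    (not_eventually_eq_const_of_injOn (hU.mem_nhds hz) hinj)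

lemma continuousAt_invFunOn_of_injOn (hU : IsOpen U) (hf : DifferentiableOn ℂ f U)
    (hinj : InjOn f U) (hz : z ∈ U) : ContinuousAt (Function.invFunOn f U) (f z) := by
  have hleft := hinj.leftInvOn_invFunOn
  have hcomp : Tendsto (Function.invFunOn f U ∘ f) (𝓝 z) (𝓝 z) :=
    tendsto_id.congr' <| by filter_upwards [hU.mem_nhds hz] with w hw using (hleft hw).symm
  rw [ContinuousAt, hleft hz]
  exact (map_mono (nhds_le_map_nhds_of_injOn hU hf hinj hz)).trans hcomp

lemma image_mem_nhds_of_injOn (hU : IsOpen U) (hf : DifferentiableOn ℂ f U)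
    (hinj : InjOn f U) (hz : z ∈ U) : f '' U ∈ 𝓝 (f z) :=
  nhds_le_map_nhds_of_injOn hU hf hinj hz (image_mem_map (hU.mem_nhds hz))

lemma differentiableAt_invFunOn_of_deriv_ne_zero (hU : IsOpen U) (hf : DifferentiableOn ℂ f U)
    (hinj : InjOn f U) (hz : z ∈ U) (hderiv : deriv f z ≠ 0) :
    DifferentiableAt ℂ (Function.invFunOn f U) (f z) := by
  have hleft := hinj.leftInvOn_invFunOn
  have hfz := (hf.differentiableAt (hU.mem_nhds hz)).hasDerivAt
  refine (HasDerivAt.of_local_left_inverse (f := f)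
    (continuousAt_invFunOn_of_injOn hU hf hinj hz) ?_ hderiv ?_).differentiableAt
  · rwa [hleft hz]
  · filter_upwards [image_mem_nhds_of_injOn hU hf hinj hz] with y hy
    exact Function.invFunOn_eq hy

theorem differentiableOn_invFunOn_image (hU : IsOpen U) (hf : DifferentiableOn ℂ f U)
    (hinj : InjOn f U) : DifferentiableOn ℂ (Function.invFunOn f U) (f '' U) := by
  have hleft := hinj.leftInvOn_invFunOn
  rintro _ ⟨z, hz, rfl⟩
  have hcont := continuousAt_invFunOn_of_injOn hU hf hinj hz
  have himage := image_mem_nhds_of_injOn hU hf hinj hz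
  have hpunctured : Tendsto (Function.invFunOn f U) (𝓝[≠] (f z)) (𝓝[≠] z) := by
    refine tendsto_nhdsWithin_iff.2 ⟨?_, ?_⟩
    · simpa only [ContinuousAt, hleft hz] using hcont.tendsto.mono_left nhdsWithin_le_nhds
    · filter_upwards [self_mem_nhdsWithin, nhdsWithin_le_nhds himage]
      rintro _ hne ⟨w, hw, rfl⟩ heq
      rw [hleft hw] at heq
      exact hne (congrArg f heq)
  -- The critical points of `f` are isolated, so the singularities of the inverse are removable.
  refine (Complex.analyticAt_of_differentiable_on_punctured_nhds_of_continuousAt ?_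
    hcont).differentiableAt.differentiableWithinAt
  filter_upwards [hpunctured.eventually (eventually_deriv_ne_zero_of_injOn hU hf hinj hz),
    nhdsWithin_le_nhds himage]
  rintro _ hderiv ⟨w, hw, rfl⟩
  rw [hleft hw] at hderiv
  exact differentiableAt_invFunOn_of_deriv_ne_zero hU hf hinj hw hderiv

end InjectiveHolomorphic

section Contraction

lemma isometry_of_isometry_comp {X Y Z : Type*} [PseudoEMetricSpace X] [PseudoEMetricSpace Y]
    [PseudoEMetricSpace Z] {f : X → Y} {g : Y → Z} (hg : LipschitzWith 1 g)
    (hf : LipschitzWith 1 f) (hgf : Isometry (g ∘ f)) : Isometry f := fun x y => by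
  refine le_antisymm (by simpa using hf x y) ?_
  rw [← hgf x y]
  simpa using hg (f x) (f y)

end Contraction

section SchwarzPick

lemma isOpen_UHP : IsOpen UHP := UpperHalfPlane.isOpen_upperHalfPlaneSet

/-- The self-map of Mathlib's upper half-plane `ℍ`, with its hyperbolic metric, induced by a map
`f : ℂ → ℂ` preserving the set `UHP`. -/
def uhpMap {f : ℂ → ℂ} (hf : MapsTo f UHP UHP) (z : ℍ) : ℍ := ⟨f z, hf z.im_pos⟩

/-- The Cayley transform of the upper half-plane onto the unit disc that sends `w` to `0`. -/
noncomputable def cayley (w : ℍ) (z : ℂ) : ℂ := (z - w) / (z - conj (w : ℂ))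

/-- The inverse of `cayley w`, from the unit disc to the upper half-plane. -/
noncomputable def cayleyInv (w : ℍ) (ζ : ℂ) : ℂ := (w - conj (w : ℂ) * ζ) / (1 - ζ)

lemma sub_conj_ne_zero (z w : ℍ) : (z : ℂ) - conj (w : ℂ) ≠ 0 := by
  intro h
  have him : z.im + w.im = 0 := by simpa using congrArg Complex.im h
  linarith [z.im_pos, w.im_pos]

lemma norm_cayley (w z : ℍ) : ‖cayley w z‖ = Real.tanh (dist z w / 2) := by
  rw [UpperHalfPlane.tanh_half_dist, cayley, norm_div, Complex.dist_eq, Complex.dist_eq]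

lemma norm_cayley_lt_one (w z : ℍ) : ‖cayley w z‖ < 1 :=
  norm_cayley w z ▸ Real.tanh_lt_one _

lemma dist_le_dist_of_norm_cayley_le {z w z' w' : ℍ} (h : ‖cayley w z‖ ≤ ‖cayley w' z'‖) :
    dist z w ≤ dist z' w' := by
  rw [norm_cayley, norm_cayley] at h
  have hartanh := Real.strictMonoOn_artanh.monotoneOn ⟨Real.neg_one_lt_tanh _, Real.tanh_lt_one _⟩
    ⟨Real.neg_one_lt_tanh _, Real.tanh_lt_one _⟩ h
  simp only [Real.artanh_tanh] at hartanh
  linarith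

lemma one_sub_ne_zero_of_mem_ball {ζ : ℂ} (hζ : ζ ∈ Metric.ball (0 : ℂ) 1) : 1 - ζ ≠ 0 := by
  intro h
  simp [← sub_eq_zero.1 h] at hζ

lemma cayleyInv_cayley (w z : ℍ) : cayleyInv w (cayley w z) = z := by
  have hz := sub_conj_ne_zero z w
  have hζ : 1 - cayley w z ≠ 0 :=
    one_sub_ne_zero_of_mem_ball (mem_ball_zero_iff.2 (norm_cayley_lt_one w z))
  rw [cayleyInv, div_eq_iff hζ, cayley]
  field_simp
  ring

lemma mapsTo_cayleyInv (w : ℍ) : MapsTo (cayleyInv w) (Metric.ball 0 1) UHP := by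
  intro ζ hζ
  have hden := normSq_pos.2 (one_sub_ne_zero_of_mem_ball hζ)
  have hnorm : normSq ζ < 1 := by
    rw [normSq_eq_norm_sq]
    exact pow_lt_one₀ (norm_nonneg ζ) (mem_ball_zero_iff.1 hζ) two_ne_zero
  have him : (cayleyInv w ζ).im = w.im * (1 - normSq ζ) / normSq (1 - ζ) := by
    rw [cayleyInv, Complex.div_im, ← sub_div]
    congr 1
    simp [normSq_apply]
    ring
  change 0 < (cayleyInv w ζ).im
  rw [him]
  exact div_pos (mul_pos w.im_pos (sub_pos.2 hnorm)) hden

lemma differentiableOn_cayley (w : ℍ) : DifferentiableOn ℂ (cayley w) UHP :=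
  (differentiableOn_id.sub_const _).div (differentiableOn_id.sub_const _) fun z hz =>
    sub_conj_ne_zero ⟨z, hz⟩ w

lemma differentiableOn_cayleyInv (w : ℍ) : DifferentiableOn ℂ (cayleyInv w) (Metric.ball 0 1) :=
  DifferentiableOn.div (by fun_prop) (by fun_prop) fun _ => one_sub_ne_zero_of_mem_ball

variable {f : ℂ → ℂ}

theorem lipschitzWith_one_uhpMap (hf : DifferentiableOn ℂ f UHP) (hmaps : MapsTo f UHP UHP) :
    LipschitzWith 1 (uhpMap hmaps) := by
  refine LipschitzWith.mk_one fun z w => ?_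
  let g : ℂ → ℂ := cayley (uhpMap hmaps w) ∘ f ∘ cayleyInv w
  have hdiff : DifferentiableOn ℂ g (Metric.ball 0 1) :=
    (differentiableOn_cayley _).comp (hf.comp (differentiableOn_cayleyInv w) (mapsTo_cayleyInv w))
      (hmaps.comp (mapsTo_cayleyInv w))
  have hball : MapsTo g (Metric.ball 0 1) (Metric.closedBall 0 1) := fun ζ hζ =>
    mem_closedBall_zero_iff.2
      (norm_cayley_lt_one _ ⟨_, hmaps (mapsTo_cayleyInv w hζ)⟩).le
  have hzero : g 0 = 0 := by simp [g, cayley, cayleyInv, uhpMap]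
  have hg : g (cayley w z) = cayley (uhpMap hmaps w) (uhpMap hmaps z) := by
    simp only [g, Function.comp_apply, cayleyInv_cayley, uhpMap]
  refine dist_le_dist_of_norm_cayley_le ?_
  rw [← hg]
  exact Complex.norm_le_norm_of_mapsTo_ball hdiff hball hzero (norm_cayley_lt_one w z)

theorem isometry_uhpMap_of_bijOn (hf : DifferentiableOn ℂ f UHP) (hbij : BijOn f UHP UHP) :
    Isometry (uhpMap hbij.mapsTo) := by
  have hinv := hbij.invOn_invFunOn
  have hmaps := (hbij.symm hinv.symm).mapsTo
  have hdiff : DifferentiableOn ℂ (Function.invFunOn f UHP) UHP := by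
    simpa only [hbij.image_eq] using differentiableOn_invFunOn_image isOpen_UHP hf hbij.injOn
  have hleft (z : ℍ) : uhpMap hmaps (uhpMap hbij.mapsTo z) = z :=
    UpperHalfPlane.ext (hinv.1 z.im_pos)
  refine Isometry.of_dist_eq fun z w => le_antisymm ?_ ?_
  · simpa using (lipschitzWith_one_uhpMap hf hbij.mapsTo).dist_le_mul z w
  · simpa [hleft] using (lipschitzWith_one_uhpMap hdiff hmaps).dist_le_mul
      (uhpMap hbij.mapsTo z) (uhpMap hbij.mapsTo w)

end SchwarzPick

section CauchyTransform

/-- The resolvent function `t ↦ (z - t)⁻¹` on `ℝ`, as a bounded continuous function. -/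
noncomputable def resolventFun (z : ℍ) : BoundedContinuousFunction ℝ ℂ :=
  .ofNormedAddCommGroup (fun t => ((z : ℂ) - t)⁻¹)
    (Continuous.inv₀ (by fun_prop) fun t => sub_ne_zero.2 (z.ne_ofReal t)) z.im⁻¹ fun t => by
      rw [norm_inv]
      refine inv_anti₀ z.im_pos ?_
      simpa [abs_of_pos z.im_pos] using Complex.abs_im_le_norm ((z : ℂ) - t)

@[simp]
lemma resolventFun_apply (z : ℍ) (t : ℝ) : resolventFun z t = ((z : ℂ) - t)⁻¹ := rfl

lemma differentiableOn_cauchyT (μ : Measure ℝ) [IsFiniteMeasure μ] :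
    DifferentiableOn ℂ (cauchyT μ) UHP := by
  have hneg : cauchyT μ = fun z => -resolventTransform μ z := by
    ext z
    rw [cauchyT, resolventTransform_apply, ← integral_neg]
    simp [resolvent, ← inv_neg]
  rw [hneg]
  intro z hz
  refine (hasDerivAt_resolventTransform z ?_).differentiableAt.neg.differentiableWithinAt
  rintro ⟨t, -, rfl⟩
  simp [UHP] at hz

variable (μ : Measure ℝ) [IsFiniteMeasure μ]

/-- The resolvent function `t ↦ (z - t)⁻¹` as a vector of `L²(μ)`. -/
noncomputable def resolventVec (z : ℍ) : Lp ℂ 2 μ :=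
  BoundedContinuousFunction.toLp 2 μ ℂ (resolventFun z)

/-- The constant function `1` as a vector of `L²(μ)`. -/
noncomputable def oneVec : Lp ℂ 2 μ := BoundedContinuousFunction.toLp 2 μ ℂ 1

lemma coeFn_resolventVec (z : ℍ) : resolventVec μ z =ᵐ[μ] fun t => ((z : ℂ) - t)⁻¹ :=
  BoundedContinuousFunction.coeFn_toLp 2 μ ℂ (resolventFun z)

lemma coeFn_oneVec : oneVec μ =ᵐ[μ] 1 :=
  BoundedContinuousFunction.coeFn_toLp 2 μ ℂ 1

lemma inner_oneVec_resolventVec (z : ℍ) : ⟪oneVec μ, resolventVec μ z⟫_ℂ = cauchyT μ z := by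
  simp [oneVec, resolventVec, BoundedContinuousFunction.inner_toLp, cauchyT]

lemma resolvent_identity (z w : ℍ) :
    ((z : ℂ) - conj (w : ℂ)) * ⟪resolventVec μ w, resolventVec μ z⟫_ℂ =
      conj (cauchyT μ w) - cauchyT μ z := by
  have hz : Integrable (fun t : ℝ => ((z : ℂ) - t)⁻¹) μ := (resolventFun z).integrable μ
  have hw : Integrable (fun t : ℝ => conj ((w : ℂ) - t)⁻¹) μ :=
    (star (resolventFun w)).integrable μ
  rw [resolventVec, resolventVec, BoundedContinuousFunction.inner_toLp, cauchyT, cauchyT,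
    ← integral_conj, ← integral_sub hw hz, ← integral_const_mul]
  refine integral_congr_ae (.of_forall fun t => ?_)
  have hzt : (z : ℂ) - t ≠ 0 := sub_ne_zero.2 (z.ne_ofReal t)
  have hwt : conj (w : ℂ) - t ≠ 0 := by
    simpa using (map_ne_zero conj).2 (sub_ne_zero.2 (w.ne_ofReal t))
  simp only [resolventFun_apply, map_inv₀, map_sub, conj_ofReal]
  field_simp
  ring

lemma cauchyT_ne_zero [NeZero μ] (z : ℍ) : cauchyT μ z ≠ 0 := by
  intro hG
  have hinner := resolvent_identity μ z z
  rw [hG, map_zero, sub_zero, mul_eq_zero, or_iff_right (sub_conj_ne_zero z z),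
    inner_self_eq_zero] at hinner
  have hae : (fun t : ℝ => ((z : ℂ) - t)⁻¹) =ᵐ[μ] 0 :=
    (coeFn_resolventVec μ z).symm.trans (hinner ▸ Lp.coeFn_zero ℂ 2 μ)
  obtain ⟨t, ht⟩ := hae.exists
  exact inv_ne_zero (sub_ne_zero.2 (z.ne_ofReal t)) ht

lemma Fmeas_mul_cauchyT [NeZero μ] (z : ℍ) : Fmeas μ z * cauchyT μ z = 1 :=
  inv_mul_cancel₀ (cauchyT_ne_zero μ z)

lemma differentiableOn_Fmeas [NeZero μ] : DifferentiableOn ℂ (Fmeas μ) UHP :=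
  (differentiableOn_cauchyT μ).inv fun z hz => cauchyT_ne_zero μ ⟨z, hz⟩

end CauchyTransform

section Atoms

lemma eq_dirac_of_ae_eq {α : Type*} [MeasurableSpace α] [MeasurableSingletonClass α]
    {μ : Measure α} [IsProbabilityMeasure μ] {c : α} (h : ∀ᵐ t ∂μ, t = c) :
    μ = Measure.dirac c := by
  have hmass : μ {c} = 1 := (prob_compl_eq_zero_iff (measurableSet_singleton c)).1 h
  have hsum := (Measure.ae_mem_finset_iff (μ := μ) (s := {c})).1 (by simpa using h)
  rwa [Finset.sum_singleton, hmass, one_smul] at hsum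

/-- `μ` is a nondegenerate convex combination of two distinct point masses. -/
def IsTwoAtomic (μ : Measure ℝ) : Prop :=
  ∃ s α u : ℝ, s ∈ Set.Ioo (0:ℝ) 1 ∧ α ≠ u ∧
    μ = ENNReal.ofReal s • Measure.dirac α + ENNReal.ofReal (1 - s) • Measure.dirac u

variable {μ : Measure ℝ} [IsProbabilityMeasure μ]

lemma isTwoAtomic_of_ae_eq_or_eq (hμ : ¬ ∃ c : ℝ, μ = Measure.dirac c) {α u : ℝ} (hne : α ≠ u)
    (h : ∀ᵐ t ∂μ, t = α ∨ t = u) : IsTwoAtomic μ := by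
  have hpos {x y : ℝ} (hxy : ∀ᵐ t ∂μ, t = x ∨ t = y) : 0 < μ.real {x} := by
    refine ENNReal.toReal_pos (fun hx => hμ ⟨y, eq_dirac_of_ae_eq ?_⟩) (measure_ne_top μ _)
    filter_upwards [hxy, measure_eq_zero_iff_ae_notMem.1 hx] with t ht htx
      using ht.resolve_left htx
  have hmass : μ ({α} ∪ {u}) = 1 := (prob_compl_eq_zero_iff (by measurability)).1 h
  have hsum : μ.real {α} + μ.real {u} = 1 := by
    rw [← measureReal_union (by simpa using hne) (measurableSet_singleton u), measureReal_def,
      hmass, ENNReal.toReal_one]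
  have hα := hpos h
  have hu := hpos (h.mono fun _ => Or.symm)
  refine ⟨μ.real {α}, α, u, ⟨hα, by linarith⟩, hne, ?_⟩
  rw [← hsum, add_sub_cancel_left, ofReal_measureReal, ofReal_measureReal]
  exact (Measure.ae_eq_or_eq_iff_eq_dirac_add_dirac hne).1 h

lemma isTwoAtomic_of_ae_mem_finset (hμ : ¬ ∃ c : ℝ, μ = Measure.dirac c) {s : Finset ℝ}
    (hs : s.card ≤ 2) (h : ∀ᵐ t ∂μ, t ∈ s) : IsTwoAtomic μ := by
  obtain ⟨t₀, ht₀⟩ := h.exists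
  by_cases hsub : s ⊆ {t₀}
  · refine absurd ⟨t₀, eq_dirac_of_ae_eq (h.mono fun t ht => ?_)⟩ hμ
    exact Finset.mem_singleton.1 (hsub ht)
  · obtain ⟨t₁, ht₁, hne⟩ := Finset.not_subset.1 hsub
    rw [Finset.mem_singleton] at hne
    have hpair : ({t₁, t₀} : Finset ℝ) = s := by
      refine Finset.eq_of_subset_of_card_le (Finset.insert_subset ht₁ (by simpa using ht₀)) ?_
      rwa [Finset.card_pair hne]
    exact isTwoAtomic_of_ae_eq_or_eq hμ hne (by simpa [← hpair] using h)

lemma isTwoAtomic_of_ae_isRoot (hμ : ¬ ∃ c : ℝ, μ = Measure.dirac c) {p : ℂ[X]} (hp : p ≠ 0)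
    (hdeg : p.natDegree ≤ 2) (h : ∀ᵐ t : ℝ ∂μ, p.IsRoot t) : IsTwoAtomic μ := by
  classical
  refine isTwoAtomic_of_ae_mem_finset hμ (s := p.roots.toFinset.image re) ?_ ?_
  · calc (p.roots.toFinset.image re).card ≤ p.roots.toFinset.card := Finset.card_image_le
      _ ≤ p.roots.card := p.roots.toFinset_card_le
      _ ≤ p.natDegree := p.card_roots'
      _ ≤ 2 := hdeg
  · filter_upwards [h] with t ht
    exact Finset.mem_image.2 ⟨t, by simpa [hp] using ht, ofReal_re t⟩

end Atoms

section PickKernel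

/-- The map `u_μ(z) = F_μ(z) - z + a`. -/
noncomputable def uMap (μ : Measure ℝ) (a : ℝ) (z : ℂ) : ℂ := Fmeas μ z - z + a

/-- The vector `t ↦ F_μ(z) / (z - t) - 1` of `L²(μ)`; the Gram matrix of these vectors is the
Pick kernel `(u_μ(z) - conj u_μ(w)) / (z - conj w)` of `u_μ`. -/
noncomputable def pickVec (μ : Measure ℝ) [IsFiniteMeasure μ] (z : ℍ) : Lp ℂ 2 μ :=
  Fmeas μ z • resolventVec μ z - oneVec μ

lemma differentiableOn_uMap (μ : Measure ℝ) [IsFiniteMeasure μ] [NeZero μ] (a : ℝ) :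
    DifferentiableOn ℂ (uMap μ a) UHP :=
  ((differentiableOn_Fmeas μ).sub differentiableOn_id).add_const _

lemma coeFn_pickVec (μ : Measure ℝ) [IsFiniteMeasure μ] (z : ℍ) :
    pickVec μ z =ᵐ[μ] fun t => Fmeas μ z * ((z : ℂ) - t)⁻¹ - 1 := by
  filter_upwards [Lp.coeFn_sub (Fmeas μ z • resolventVec μ z) (oneVec μ),
    Lp.coeFn_smul (Fmeas μ z) (resolventVec μ z), coeFn_resolventVec μ z, coeFn_oneVec μ]
    with t hsub hsmul hres hone
  rw [pickVec, hsub, Pi.sub_apply, hsmul, Pi.smul_apply, hres, hone, Pi.one_apply, smul_eq_mul]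

variable (μ : Measure ℝ) [IsProbabilityMeasure μ] (a : ℝ)

lemma inner_oneVec_self : ⟪oneVec μ, oneVec μ⟫_ℂ = 1 := by
  rw [oneVec, BoundedContinuousFunction.inner_toLp]
  simp

lemma inner_oneVec_pickVec (z : ℍ) : ⟪oneVec μ, pickVec μ z⟫_ℂ = 0 := by
  rw [pickVec, inner_sub_right, inner_smul_right, inner_oneVec_resolventVec, inner_oneVec_self,
    Fmeas_mul_cauchyT, sub_self]

theorem sub_conj_mul_inner_pickVec (z w : ℍ) :
    ((z : ℂ) - conj (w : ℂ)) * ⟪pickVec μ w, pickVec μ z⟫_ℂ =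
      uMap μ a z - conj (uMap μ a w) := by
  have hFz := Fmeas_mul_cauchyT μ z
  have hFw : conj (Fmeas μ w) * conj (cauchyT μ w) = 1 := by
    rw [← map_mul, Fmeas_mul_cauchyT, map_one]
  have hinner : ⟪pickVec μ w, pickVec μ z⟫_ℂ =
      conj (Fmeas μ w) * (Fmeas μ z * ⟪resolventVec μ w, resolventVec μ z⟫_ℂ) - 1 := by
    conv_lhs => rw [pickVec, inner_sub_left, inner_oneVec_pickVec, sub_zero, inner_smul_left,
      pickVec, inner_sub_right, inner_smul_right, ← inner_conj_symm (resolventVec μ w) (oneVec μ),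
      inner_oneVec_resolventVec, mul_sub, hFw]
  rw [hinner, uMap, uMap]
  simp only [map_add, map_sub, conj_ofReal]
  linear_combination conj (Fmeas μ w) * Fmeas μ z * resolvent_identity μ z w + Fmeas μ z * hFw -
    conj (Fmeas μ w) * hFz

lemma im_uMap (z : ℍ) : (uMap μ a z).im = z.im * ‖pickVec μ z‖ ^ 2 := by
  have him := congrArg Complex.im (sub_conj_mul_inner_pickVec μ a z z)
  have hnorm : ⟪pickVec μ z, pickVec μ z⟫_ℂ = (‖pickVec μ z‖ ^ 2 : ℝ) := by
    exact_mod_cast inner_self_eq_norm_sq_to_K (𝕜 := ℂ) (pickVec μ z)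
  rw [hnorm, im_mul_ofReal, sub_im, sub_im, conj_im, conj_im, UpperHalfPlane.coe_im] at him
  linarith

variable {μ}

lemma pickVec_ne_zero (hμ : ¬ ∃ c : ℝ, μ = Measure.dirac c) (z : ℍ) : pickVec μ z ≠ 0 := by
  intro hzero
  refine hμ ⟨(z - Fmeas μ z).re, eq_dirac_of_ae_eq ?_⟩
  filter_upwards [coeFn_pickVec μ z, hzero ▸ Lp.coeFn_zero ℂ 2 μ] with t hpick ht
  rw [hpick, Pi.zero_apply, sub_eq_zero, mul_inv_eq_one₀ (sub_ne_zero.2 (z.ne_ofReal t))] at ht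
  simp [ht]

lemma mapsTo_uMap (hμ : ¬ ∃ c : ℝ, μ = Measure.dirac c) : MapsTo (uMap μ a) UHP UHP := by
  intro z hz
  lift z to ℍ using hz
  have hnorm := norm_pos_iff.2 (pickVec_ne_zero hμ z)
  change 0 < (uMap μ a z).im
  rw [im_uMap]
  exact mul_pos z.im_pos (pow_pos hnorm 2)

theorem cosh_half_dist_uhpMap_uMap (hμ : ¬ ∃ c : ℝ, μ = Measure.dirac c) (z w : ℍ) :
    Real.cosh (dist (uhpMap (mapsTo_uMap a hμ) z) (uhpMap (mapsTo_uMap a hμ) w) / 2) *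
        (‖pickVec μ w‖ * ‖pickVec μ z‖) =
      Real.cosh (dist z w / 2) * ‖⟪pickVec μ w, pickVec μ z⟫_ℂ‖ := by
  have hmaps := mapsTo_uMap a hμ
  have himz : (uhpMap hmaps z).im = z.im * ‖pickVec μ z‖ ^ 2 := im_uMap μ a z
  have himw : (uhpMap hmaps w).im = w.im * ‖pickVec μ w‖ ^ 2 := im_uMap μ a w
  have hdist : dist (uhpMap hmaps z : ℂ) (conj (uhpMap hmaps w : ℂ)) =
      dist (z : ℂ) (conj (w : ℂ)) * ‖⟪pickVec μ w, pickVec μ z⟫_ℂ‖ := by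
    rw [Complex.dist_eq, Complex.dist_eq, ← norm_mul, sub_conj_mul_inner_pickVec μ a]
    rfl
  have hsqrt : √((uhpMap hmaps z).im * (uhpMap hmaps w).im) =
      √(z.im * w.im) * (‖pickVec μ w‖ * ‖pickVec μ z‖) := by
    rw [himz, himw, ← Real.sqrt_sq (by positivity : 0 ≤ ‖pickVec μ w‖ * ‖pickVec μ z‖),
      ← Real.sqrt_mul (by positivity)]
    congr 1
    ring
  have hz := norm_ne_zero_iff.2 (pickVec_ne_zero hμ z)
  have hw := norm_ne_zero_iff.2 (pickVec_ne_zero hμ w)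
  rw [UpperHalfPlane.cosh_half_dist, UpperHalfPlane.cosh_half_dist, hdist, hsqrt]
  field_simp

end PickKernel

section Rigidity

variable {μ : Measure ℝ} [IsProbabilityMeasure μ] {z w : ℍ}

lemma isTwoAtomic_of_pickVec_eq_smul (hμ : ¬ ∃ c : ℝ, μ = Measure.dirac c) (hzw : z ≠ w) {c : ℂ}
    (h : pickVec μ z = c • pickVec μ w) : IsTwoAtomic μ := by
  let p : ℂ[X] := (c - 1) • ((Polynomial.C (z : ℂ) - .X) * (Polynomial.C (w : ℂ) - .X)) +
    Fmeas μ z • (Polynomial.C (w : ℂ) - .X) - (c * Fmeas μ w) • (Polynomial.C (z : ℂ) - .X)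
  have hp : p ≠ 0 := by
    intro hzero
    have heval : Fmeas μ z * ((w : ℂ) - z) = 0 := by
      simpa [p] using congrArg (Polynomial.eval (z : ℂ)) hzero
    rcases mul_eq_zero.1 heval with hF | hwz
    · exact inv_ne_zero (cauchyT_ne_zero μ z) hF
    · exact hzw (UpperHalfPlane.ext (sub_eq_zero.1 hwz).symm)
  refine isTwoAtomic_of_ae_isRoot hμ hp (by dsimp only [p]; compute_degree) ?_
  filter_upwards [coeFn_pickVec μ z, coeFn_pickVec μ w, h ▸ Lp.coeFn_smul c (pickVec μ w)]
    with t hz hw hsmul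
  have hzt : (z : ℂ) - t ≠ 0 := sub_ne_zero.2 (z.ne_ofReal t)
  have hwt : (w : ℂ) - t ≠ 0 := sub_ne_zero.2 (w.ne_ofReal t)
  have hker : Fmeas μ z * ((z : ℂ) - t)⁻¹ - 1 = c * (Fmeas μ w * ((w : ℂ) - t)⁻¹ - 1) := by
    rw [← hz, hsmul, Pi.smul_apply, hw, smul_eq_mul]
  field_simp at hker
  simp only [p, Polynomial.IsRoot, Polynomial.eval_sub, Polynomial.eval_add, Polynomial.eval_smul,
    Polynomial.eval_mul, Polynomial.eval_C, Polynomial.eval_X, smul_eq_mul]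
  linear_combination hker

theorem isTwoAtomic_of_dist_uhpMap_eq (hμ : ¬ ∃ c : ℝ, μ = Measure.dirac c) {a : ℝ} (hzw : z ≠ w)
    (hdist : dist (uhpMap (mapsTo_uMap a hμ) z) (uhpMap (mapsTo_uMap a hμ) w) = dist z w) :
    IsTwoAtomic μ := by
  have hcosh := cosh_half_dist_uhpMap_uMap a hμ z w
  rw [hdist] at hcosh
  have hinner := (mul_left_cancel₀ (Real.cosh_pos _).ne' hcosh).symm
  obtain ⟨c, -, hc⟩ := (norm_inner_eq_norm_iff (𝕜 := ℂ) (pickVec_ne_zero hμ w)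
    (pickVec_ne_zero hμ z)).1 hinner
  exact isTwoAtomic_of_pickVec_eq_smul hμ hzw hc

end Rigidity

section Moebius

lemma mapsTo_ofReal_sub_div (c m : ℝ) {k : ℝ} (hk : 0 < k) :
    MapsTo (fun z : ℂ => c - k / (z - m)) UHP UHP := by
  intro z hz
  lift z to ℍ using hz
  have hden : 0 < normSq ((z : ℂ) - m) := normSq_pos.2 (sub_ne_zero.2 (z.ne_ofReal m))
  have him : ((c : ℂ) - k / (z - m)).im = k * z.im / normSq ((z : ℂ) - m) := by
    simp [Complex.div_im]
  change 0 < ((c : ℂ) - k / (z - m)).im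
  rw [him]
  exact div_pos (mul_pos hk z.im_pos) hden

-- At `z = m` this holds through the junk value `k / 0 = 0`, used twice.
lemma leftInverse_sub_div {K : Type*} [Field K] (c m : K) {k : K} (hk : k ≠ 0) :
    Function.LeftInverse (fun z => m - k / (z - c)) (fun z => c - k / (z - m)) := by
  intro z
  simp only [sub_sub_cancel_left]
  field_simp
  ring

lemma bijOn_ofReal_sub_div (c m : ℝ) {k : ℝ} (hk : 0 < k) :
    BijOn (fun z : ℂ => c - k / (z - m)) UHP UHP :=
  have hkC : (k : ℂ) ≠ 0 := ofReal_ne_zero.2 hk.ne'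
  InvOn.bijOn ⟨(leftInverse_sub_div _ _ hkC).leftInvOn _, (leftInverse_sub_div _ _ hkC).leftInvOn _⟩
    (mapsTo_ofReal_sub_div c m hk) (mapsTo_ofReal_sub_div m c hk)

lemma cauchyT_two_dirac {s : ℝ} (hs : s ∈ Icc 0 1) (α u : ℝ) (z : ℍ) :
    cauchyT (ENNReal.ofReal s • Measure.dirac α + ENNReal.ofReal (1 - s) • Measure.dirac u) z =
      s * ((z : ℂ) - α)⁻¹ + (1 - s) * ((z : ℂ) - u)⁻¹ := by
  have hint (r x : ℝ) : Integrable (fun t : ℝ => ((z : ℂ) - t)⁻¹)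
      (ENNReal.ofReal r • Measure.dirac x) :=
    ((resolventFun z).integrable (Measure.dirac x)).smul_measure ENNReal.ofReal_ne_top
  rw [cauchyT, integral_add_measure (hint _ _) (hint _ _), integral_smul_measure,
    integral_smul_measure, integral_dirac, integral_dirac, ENNReal.toReal_ofReal hs.1,
    ENNReal.toReal_ofReal (sub_nonneg.2 hs.2)]
  simp

lemma uMap_two_dirac {s : ℝ} (hs : s ∈ Icc 0 1) (α u a : ℝ) (z : ℍ) :
    uMap (ENNReal.ofReal s • Measure.dirac α + ENNReal.ofReal (1 - s) • Measure.dirac u) a z =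
      (a - (s * α + (1 - s) * u) : ℝ) -
        (s * (1 - s) * (α - u) ^ 2 : ℝ) / (z - (s * u + (1 - s) * α : ℝ)) := by
  have hα : (z : ℂ) - α ≠ 0 := sub_ne_zero.2 (z.ne_ofReal α)
  have hu : (z : ℂ) - u ≠ 0 := sub_ne_zero.2 (z.ne_ofReal u)
  have hm : (z : ℂ) - (s * u + (1 - s) * α : ℝ) ≠ 0 := sub_ne_zero.2 (z.ne_ofReal _)
  have hG : s * ((z : ℂ) - α)⁻¹ + (1 - s) * ((z : ℂ) - u)⁻¹ =
      (z - (s * u + (1 - s) * α : ℝ)) / ((z - α) * (z - u)) := by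
    field_simp
    push_cast
    ring
  rw [uMap, Fmeas, cauchyT_two_dirac hs, hG, inv_div]
  field_simp
  push_cast
  ring

theorem bijOn_uMap_of_isTwoAtomic {μ : Measure ℝ} (hμ : IsTwoAtomic μ) (a : ℝ) :
    BijOn (uMap μ a) UHP UHP := by
  obtain ⟨s, α, u, ⟨hs0, hs1⟩, hne, rfl⟩ := hμ
  have hvar : 0 < s * (1 - s) * (α - u) ^ 2 :=
    mul_pos (mul_pos hs0 (sub_pos.2 hs1)) (sq_pos_of_ne_zero (sub_ne_zero.2 hne))
  exact (bijOn_ofReal_sub_div _ _ hvar).congr fun z hz =>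
    (uMap_two_dirac ⟨hs0.le, hs1.le⟩ α u a ⟨z, hz⟩).symm

end Moebius

/-- For Borel probability measures `μ, ν` on `ℝ`, neither a point mass, `a ∈ ℝ`,
and `u_μ(z) = F_μ(z) − z + a`, `u_ν(z) = F_ν(z) − z + a`, the composition
`u_μ ∘ u_ν` is a conformal automorphism of `ℂ⁺` if and only if both `μ` and `ν`
are convex combinations of two point masses. -/
theorem special_case_two_atoms
    (μ ν : Measure ℝ) [IsProbabilityMeasure μ] [IsProbabilityMeasure ν]
    (hμ : ¬ ∃ c : ℝ, μ = Measure.dirac c) (hν : ¬ ∃ c : ℝ, ν = Measure.dirac c)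
    (a : ℝ) :
    (Set.BijOn
        (fun z => Fmeas μ (Fmeas ν z - z + (a : ℂ)) - (Fmeas ν z - z + (a : ℂ)) + (a : ℂ))
        UHP UHP) ↔
      ((∃ s α u : ℝ, s ∈ Set.Ioo (0:ℝ) 1 ∧ α ≠ u ∧
          μ = ENNReal.ofReal s • Measure.dirac α +
              ENNReal.ofReal (1 - s) • Measure.dirac u) ∧
       (∃ t β v : ℝ, t ∈ Set.Ioo (0:ℝ) 1 ∧ β ≠ v ∧
          ν = ENNReal.ofReal t • Measure.dirac β +
              ENNReal.ofReal (1 - t) • Measure.dirac v)) := by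
  change BijOn (uMap μ a ∘ uMap ν a) UHP UHP ↔ IsTwoAtomic μ ∧ IsTwoAtomic ν
  refine ⟨fun hbij => ?_, fun ⟨hμ₂, hν₂⟩ =>
    (bijOn_uMap_of_isTwoAtomic hμ₂ a).comp (bijOn_uMap_of_isTwoAtomic hν₂ a)⟩
  have hmapsμ := mapsTo_uMap a hμ
  have hmapsν := mapsTo_uMap a hν
  have hdiffμ := differentiableOn_uMap μ a
  have hdiffν := differentiableOn_uMap ν a
  have hcomp : Isometry (uhpMap hmapsμ ∘ uhpMap hmapsν) :=
    isometry_uhpMap_of_bijOn (hdiffμ.comp hdiffν hmapsν) hbij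
  have hisoν : Isometry (uhpMap hmapsν) :=
    isometry_of_isometry_comp (lipschitzWith_one_uhpMap hdiffμ hmapsμ)
      (lipschitzWith_one_uhpMap hdiffν hmapsν) hcomp
  obtain ⟨z, w, hzw⟩ := exists_pair_ne ℍ
  have hdistμ := (hcomp.dist_eq z w).trans (hisoν.dist_eq z w).symm
  exact ⟨isTwoAtomic_of_dist_uhpMap_eq hμ (hisoν.injective.ne hzw) hdistμ,
    isTwoAtomic_of_dist_uhpMap_eq hν hzw (hisoν.dist_eq z w)⟩
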